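/- arXiv:2201.06051 — 4 statements merged into one kernel-verified Lean document; each statement's English description precedes it below -/
import Mathlib

section
/- Let A be a unital C*-algebra, let α be a strongly continuous one-parameter group of *-automorphisms of A, and let 0 < β < ∞. Then every β-KMS state φ for α is invariant under the time evolution: φ(α t a) = φ(a) for all t ∈ ℝ and all a ∈ A. -/
/-!
Apply the KMS condition to the pair `(1, b)`: it yields a bounded function `F` on the closed strip
of width `β` whose two boundary values agree, both being `t ↦ φ (α t b)`. The `iβ`-periodic
extension of `F` is therefore bounded and continuous on `ℂ`, and holomorphic off the lines
`Im z ∈ β ℤ`. A line is removable for continuous functions that are holomorphic off it (Morera's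
theorem, `differentiableOn_strip_of_continuousOn`), so the extension is entire; by Liouville's
theorem it is constant, hence `φ (α t b) = F t = F 0 = φ b`.
-/

open Complex
open scoped ComplexOrder

variable {A : Type*} [NormedRing A] [StarRing A] [CStarRing A]
  [NormedAlgebra ℂ A] [CompleteSpace A] [StarModule ℂ A]

/-- A state on a unital C*-algebra: a positive normalized linear functional. -/
def IsState (φ : A →ₗ[ℂ] ℂ) : Prop :=
  (∀ a : A, 0 ≤ φ (star a * a)) ∧ φ 1 = 1

/-- A strongly continuous one-parameter group of *-automorphisms. -/
def IsDynamics (α : ℝ → (A ≃⋆ₐ[ℂ] A)) : Prop :=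
  (∀ a : A, α 0 a = a) ∧
  (∀ (s t : ℝ) (a : A), α (s + t) a = α s (α t a)) ∧
  (∀ a : A, Continuous fun t : ℝ => α t a)

/-- The closed strip `{z : 0 ≤ Im z ≤ β}`. -/
def closedStrip (β : ℝ) : Set ℂ := {z : ℂ | 0 ≤ z.im ∧ z.im ≤ β}

/-- The open strip `{z : 0 < Im z < β}`. -/
def openStrip (β : ℝ) : Set ℂ := {z : ℂ | 0 < z.im ∧ z.im < β}

/-- The β-KMS condition for a state `φ` with respect to the dynamics `α`. -/
def IsKMSState (α : ℝ → (A ≃⋆ₐ[ℂ] A)) (β : ℝ) (φ : A →ₗ[ℂ] ℂ) : Prop :=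
  IsState φ ∧
  ∀ a b : A, ∃ F : ℂ → ℂ,
    ContinuousOn F (closedStrip β) ∧
    (∃ C : ℝ, ∀ z ∈ closedStrip β, ‖F z‖ ≤ C) ∧
    DifferentiableOn ℂ F (openStrip β) ∧
    (∀ t : ℝ, F t = φ (a * α t b)) ∧
    (∀ t : ℝ, F (t + β * Complex.I) = φ (α t b * a))

/-- The ground state (∞-KMS) condition. -/
def IsGroundState (α : ℝ → (A ≃⋆ₐ[ℂ] A)) (φ : A →ₗ[ℂ] ℂ) : Prop :=
  IsState φ ∧
  ∀ a b : A, ∃ F : ℂ → ℂ,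
    ContinuousOn F {z : ℂ | 0 ≤ z.im} ∧
    (∃ C : ℝ, ∀ z ∈ {z : ℂ | 0 ≤ z.im}, ‖F z‖ ≤ C) ∧
    DifferentiableOn ℂ F {z : ℂ | 0 < z.im} ∧
    (∀ t : ℝ, F t = φ (a * α t b))

open Set

/-- The real line is removable: a rectangle is split along the line `Im = 0`, and Cauchy–Goursat
with continuity up to the boundary applies to each half, so Morera's theorem gives holomorphy. -/
lemma differentiableOn_strip_of_continuousOn {β : ℝ} (hβ : 0 < β) {G : ℂ → ℂ}
    (hc : ContinuousOn G {z : ℂ | -β < z.im ∧ z.im < β})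
    (hd : ∀ z : ℂ, -β < z.im → z.im < β → z.im ≠ 0 → DifferentiableAt ℂ G z) :
    DifferentiableOn ℂ G {z : ℂ | -β < z.im ∧ z.im < β} := by
  have hU : IsOpen {z : ℂ | -β < z.im ∧ z.im < β} :=
    (isOpen_lt continuous_const continuous_im).inter (isOpen_lt continuous_im continuous_const)
  refine (isConservativeOn_and_continuousOn_iff_isDifferentiableOn hU).1 ⟨?_, hc⟩
  intro z w hzw
  have hz : -β < z.im ∧ z.im < β := hzw (by simp [Rectangle, mem_reProdIm])
  have hw : -β < w.im ∧ w.im < β := hzw (by simp [Rectangle, mem_reProdIm])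
  -- A rectangle with one horizontal side on the real line, lying above or below it.
  have key : ∀ c : ℝ, -β < c → c < β →
      (∫ x : ℝ in z.re..w.re, G (x + (0 : ℝ) * I)) - (∫ x : ℝ in z.re..w.re, G (x + c * I)) +
      I • (∫ y : ℝ in (0 : ℝ)..c, G (w.re + y * I)) -
      I • (∫ y : ℝ in (0 : ℝ)..c, G (z.re + y * I)) = 0 := by
    intro c h1 h2
    have := integral_boundary_rect_eq_zero_of_continuousOn_of_differentiableOn G
      ⟨z.re, 0⟩ ⟨w.re, c⟩ ?_ ?_
    · simpa using this
    · refine hc.mono ?_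
      intro u hu
      have h := hu.2
      simp only [mem_preimage, mem_uIcc] at h
      simp only [mem_ofPred_eq]
      constructor <;> rcases h with h | h <;> linarith [h.1, h.2]
    · intro u hu
      have h := hu.2
      simp only [mem_preimage, mem_Ioo, min_lt_iff, lt_max_iff] at h
      refine (hd u ?_ ?_ ?_).differentiableWithinAt
      · rcases h.1 with h | h <;> linarith
      · rcases h.2 with h | h <;> linarith
      · grind
  have hint : ∀ a c : ℝ, -β < c → c < β →
      IntervalIntegrable (fun y : ℝ => G (a + y * I)) MeasureTheory.volume 0 c := by
    intro a c h1 h2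
    apply ContinuousOn.intervalIntegrable
    refine hc.comp (by fun_prop) ?_
    intro y hy
    rw [mem_uIcc] at hy
    simp only [mem_ofPred_eq, add_im, ofReal_im, mul_im, ofReal_re, I_im, I_re]
    constructor <;> rcases hy with h | h <;> linarith [h.1, h.2]
  have hV : ∀ a : ℝ, (∫ y : ℝ in z.im..w.im, G (a + y * I)) =
      (∫ y : ℝ in (0 : ℝ)..w.im, G (a + y * I)) - ∫ y : ℝ in (0 : ℝ)..z.im, G (a + y * I) :=
    fun a => (intervalIntegral.integral_interval_sub_left (hint a _ hw.1 hw.2)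
      (hint a _ hz.1 hz.2)).symm
  rw [← add_eq_zero_iff_eq_neg, wedgeIntegral_add_wedgeIntegral_eq, hV, hV]
  have k1 := key z.im hz.1 hz.2
  have k2 := key w.im hw.1 hw.2
  simp only [smul_eq_mul] at *
  linear_combination k2 - k1

/-- The gluing of `F` on the upper half of the double strip with its translate on the lower half;
it is holomorphic when the two boundary values of `F` agree. -/
lemma differentiableOn_glue {β : ℝ} (hβ : 0 < β) {F : ℂ → ℂ}
    (hc : ContinuousOn F (closedStrip β)) (hd : DifferentiableOn ℂ F (openStrip β))
    (hper : ∀ t : ℝ, F (t + β * I) = F t) :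
    DifferentiableOn ℂ (fun z : ℂ => if 0 ≤ z.im then F z else F (z + β * I))
      {z : ℂ | -β < z.im ∧ z.im < β} := by
  have hO : IsOpen (openStrip β) :=
    (isOpen_lt continuous_const continuous_im).inter (isOpen_lt continuous_im continuous_const)
  apply differentiableOn_strip_of_continuousOn hβ
  · have h1 : ContinuousOn (fun z : ℂ => if 0 ≤ z.im then F z else F (z + β * I))
        (closedStrip β) :=
      hc.congr fun z hz => if_pos hz.1
    have h2 : ContinuousOn (fun z : ℂ => if 0 ≤ z.im then F z else F (z + β * I))
        {z : ℂ | -β ≤ z.im ∧ z.im ≤ 0} := by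
      have : ContinuousOn (fun z : ℂ => F (z + β * I)) {z : ℂ | -β ≤ z.im ∧ z.im ≤ 0} := by
        refine hc.comp (by fun_prop) ?_
        intro z hz
        simp only [closedStrip, mem_ofPred_eq, add_im, mul_im, ofReal_re, ofReal_im, I_im, I_re]
          at hz ⊢
        constructor <;> linarith [hz.1, hz.2]
      refine this.congr ?_
      intro z hz
      by_cases h : 0 ≤ z.im
      · have h0 : z = (z.re : ℂ) := Complex.ext (by simp) (by simpa using le_antisymm hz.2 h)
        simp only [if_pos h]
        rw [h0, hper]
      · simp [h]
    refine (h1.union_of_isClosed h2 ?_ ?_).mono ?_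
    · exact (isClosed_le continuous_const continuous_im).inter
        (isClosed_le continuous_im continuous_const)
    · exact (isClosed_le continuous_const continuous_im).inter
        (isClosed_le continuous_im continuous_const)
    · intro z hz
      rcases le_total 0 z.im with h | h
      · exact Or.inl ⟨h, hz.2.le⟩
      · exact Or.inr ⟨hz.1.le, h⟩
  · intro z h1 h2 h0
    rcases lt_or_gt_of_ne h0 with h | h
    · have hm : z + β * I ∈ openStrip β := by
        simp only [openStrip, mem_ofPred_eq, add_im, mul_im, ofReal_re, ofReal_im, I_im, I_re]
        constructor <;> linarith
      have hF : DifferentiableAt ℂ (fun z : ℂ => F (z + β * I)) z :=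
        DifferentiableAt.comp z (hd.differentiableAt (hO.mem_nhds hm)) (by fun_prop)
      refine hF.congr_of_eventuallyEq ?_
      filter_upwards [(isOpen_lt continuous_im continuous_const).mem_nhds h] with u hu
      exact if_neg (not_le.2 hu)
    · have hF : DifferentiableAt ℂ F z := hd.differentiableAt (hO.mem_nhds ⟨h, h2⟩)
      refine hF.congr_of_eventuallyEq ?_
      filter_upwards [(isOpen_lt continuous_const continuous_im).mem_nhds h] with u hu
      exact if_pos (le_of_lt hu)

/-- Liouville on the strip: a bounded function, holomorphic inside, with equal boundary values has
an entire bounded `iβ`-periodic extension, so it is constant on the real line. -/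
lemma strip_function_const {β : ℝ} (hβ : 0 < β) {F : ℂ → ℂ}
    (hc : ContinuousOn F (closedStrip β)) (hb : ∃ C : ℝ, ∀ z ∈ closedStrip β, ‖F z‖ ≤ C)
    (hd : DifferentiableOn ℂ F (openStrip β))
    (hper : ∀ t : ℝ, F (t + β * I) = F t) (t : ℝ) : F t = F 0 := by
  have hG := differentiableOn_glue hβ hc hd hper
  have hU : IsOpen {z : ℂ | -β < z.im ∧ z.im < β} :=
    (isOpen_lt continuous_const continuous_im).inter (isOpen_lt continuous_im continuous_const)
  -- The `iβ`-periodic extension of `F`.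
  set E : ℂ → ℂ := fun z => F (z - (⌊z.im / β⌋ : ℝ) * β * I) with hE
  have him : ∀ (z : ℂ) (r : ℝ), (z - r * β * I).im = z.im - r * β := by
    intro z r
    simp
  have hdiff : Differentiable ℂ E := by
    intro z
    set n : ℤ := ⌊z.im / β⌋ with hn
    have e1 : (n : ℝ) * β ≤ z.im := (le_div_iff₀ hβ).1 (Int.floor_le _)
    have e2 : z.im < (n + 1 : ℝ) * β := (div_lt_iff₀ hβ).1 (Int.lt_floor_add_one _)
    have hm : z - (n : ℝ) * β * I ∈ {z : ℂ | -β < z.im ∧ z.im < β} := by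
      rw [mem_ofPred_eq, him]
      constructor <;> linarith
    have hcomp : DifferentiableAt ℂ (fun u : ℂ => (fun z : ℂ => if 0 ≤ z.im then F z else
        F (z + β * I)) (u - (n : ℝ) * β * I)) z :=
      DifferentiableAt.comp z (hG.differentiableAt (hU.mem_nhds hm)) (by fun_prop)
    refine hcomp.congr_of_eventuallyEq ?_
    have hcont : Continuous fun u : ℂ => u - (n : ℝ) * β * I := by fun_prop
    filter_upwards [(hU.preimage hcont).mem_nhds hm] with u hu
    rw [mem_preimage, mem_ofPred_eq, him] at hu
    simp only [him, hE]
    split_ifs with h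
    · have : ⌊u.im / β⌋ = n := by
        rw [Int.floor_eq_iff, le_div_iff₀ hβ, div_lt_iff₀ hβ]
        constructor <;> linarith [hu.2]
      rw [this]
    · have : ⌊u.im / β⌋ = n - 1 := by
        rw [Int.floor_eq_iff, le_div_iff₀ hβ, div_lt_iff₀ hβ]
        push_cast
        constructor <;> linarith [hu.1]
      rw [this]
      congr 1
      push_cast
      ring
  have hbdd : Bornology.IsBounded (range E) := by
    obtain ⟨C, hC⟩ := hb
    rw [isBounded_iff_forall_norm_le]
    refine ⟨C, ?_⟩
    rintro _ ⟨z, rfl⟩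
    apply hC
    have e1 : (⌊z.im / β⌋ : ℝ) * β ≤ z.im := (le_div_iff₀ hβ).1 (Int.floor_le _)
    have e2 : z.im < (⌊z.im / β⌋ + 1 : ℝ) * β := (div_lt_iff₀ hβ).1 (Int.lt_floor_add_one _)
    rw [closedStrip, mem_ofPred_eq, him]
    constructor <;> linarith
  have := hdiff.apply_eq_apply_of_bounded hbdd t 0
  simpa [hE] using this


/-- Every β-KMS state (0 < β < ∞) for a strongly continuous one-parameter group of
*-automorphisms of a unital C*-algebra is invariant under the time evolution. -/
theorem kms_state_time_invariant
    (α : ℝ → (A ≃⋆ₐ[ℂ] A)) (hα : IsDynamics α) (β : ℝ) (hβ : 0 < β)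
    (φ : A →ₗ[ℂ] ℂ) (hφ : IsKMSState α β φ) :
    ∀ (t : ℝ) (a : A), φ (α t a) = φ a := by
  intro t a
  obtain ⟨F, hc, hb, hd, h0, h1⟩ := hφ.2 1 a
  have := strip_function_const hβ hc hb hd (fun t => by rw [h0, h1, one_mul, mul_one]) t
  have hz := h0 0
  rw [ofReal_zero, hα.1, one_mul] at hz
  rwa [h0, one_mul, hz] at this
end

section
/- Let A be a unital C*-algebra and α a strongly continuous one-parameter group of *-automorphisms of A. Then every ground state (∞-KMS state) φ for α is invariant under the time evolution: φ(α t a) = φ(a) for all t ∈ ℝ and all a ∈ A. -/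
/-!
The orbit function `t ↦ φ (α t a)` is the boundary value of a bounded holomorphic function `F` on
the upper half-plane (take `1` and `a` in the ground state condition). If `a` is self-adjoint, `F`
is real on `ℝ`, so `exp (i F)` and `exp (-i F)` are bounded and unimodular on `ℝ`. The
Phragmén–Lindelöf principle bounds both by `1`, hence `Im F = 0` throughout the half-plane, and the
open mapping theorem makes `F` constant. A general `a` is a combination of its self-adjoint real
and imaginary parts, and `α t` and `φ` are complex linear.
-/

open Complex
open scoped ComplexOrder

variable {A : Type*} [NormedRing A] [StarRing A] [CStarRing A]
  [NormedAlgebra ℂ A] [CompleteSpace A] [StarModule ℂ A]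

/-- The maximum principle for `Im F`, obtained from the Phragmén–Lindelöf principle for
`exp (i F)`. -/
lemma im_nonneg_of_bounded_of_real {F : ℂ → ℂ} (hc : ContinuousOn F {z : ℂ | 0 ≤ z.im})
    {C : ℝ} (hC : ∀ z ∈ {z : ℂ | 0 ≤ z.im}, ‖F z‖ ≤ C)
    (hd : DifferentiableOn ℂ F {z : ℂ | 0 < z.im}) (hr : ∀ t : ℝ, (F t).im = 0)
    {z : ℂ} (hz : 0 ≤ z.im) : 0 ≤ (F z).im := by
  -- Multiplication by `I` turns the right half-plane into the upper half-plane.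
  set G : ℂ → ℂ := fun w => Complex.exp (I * F (I * w)) with hG
  have hnorm : ∀ w, ‖G w‖ = Real.exp (-(F (I * w)).im) := fun w => by
    simp [hG, Complex.norm_exp]
  have hbd : ∀ w : ℂ, 0 ≤ w.re → ‖G w‖ ≤ Real.exp C := fun w hw => by
    rw [hnorm]
    gcongr
    have h1 : ‖F (I * w)‖ ≤ C := hC _ (by simpa using hw)
    have h2 := Complex.abs_im_le_norm (F (I * w))
    linarith [neg_abs_le (F (I * w)).im]
  have hdiff : DiffContOnCl ℂ G {w | 0 < w.re} := by
    constructor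
    · refine ((hd.comp (by fun_prop) ?_).const_mul I).cexp
      intro w hw
      simpa using hw
    · rw [Complex.closure_setOfPred_lt_re]
      refine (continuousOn_const.mul (hc.comp (by fun_prop) ?_)).cexp
      intro w hw
      simpa using hw
  have key : ‖G (-I * z)‖ ≤ 1 := by
    refine PhragmenLindelof.right_half_plane_of_bounded_on_real hdiff ⟨1, by norm_num, 0, ?_⟩ ?_ ?_
      (by simpa using hz)
    · refine Asymptotics.IsBigO.of_bound (Real.exp C) ?_
      refine Filter.Eventually.filter_mono inf_le_right ?_
      refine Filter.eventually_principal.2 fun w hw => ?_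
      simpa using hbd w (le_of_lt hw)
    · refine Filter.isBoundedUnder_of_eventually_le (a := Real.exp C) ?_
      filter_upwards [Filter.eventually_ge_atTop (0 : ℝ)] with x hx
      exact hbd x (by simpa using hx)
    · intro x
      have h : I * (x * I) = ((-x : ℝ) : ℂ) := by
        push_cast
        linear_combination (x : ℂ) * I_mul_I
      rw [hnorm, h, hr]
      simp
  have hI : I * (-I * z) = z := by linear_combination (-z) * I_mul_I
  rw [hnorm, hI] at key
  simpa using key

lemma eq_of_bounded_of_real {F : ℂ → ℂ} (hc : ContinuousOn F {z : ℂ | 0 ≤ z.im})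
    {C : ℝ} (hC : ∀ z ∈ {z : ℂ | 0 ≤ z.im}, ‖F z‖ ≤ C)
    (hd : DifferentiableOn ℂ F {z : ℂ | 0 < z.im}) (hr : ∀ t : ℝ, (F t).im = 0)
    (s t : ℝ) : F s = F t := by
  have hopen : IsOpen {z : ℂ | 0 < z.im} := isOpen_lt continuous_const Complex.continuous_im
  have him : ∀ z ∈ {z : ℂ | 0 < z.im}, (F z).im = 0 := fun z hz => by
    have h1 := im_nonneg_of_bounded_of_real hc hC hd hr (le_of_lt hz)
    have h2 := im_nonneg_of_bounded_of_real (F := fun z => -F z) hc.neg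
      (C := C) (fun z hz => by simpa using hC z hz) hd.neg (fun t => by simp [hr t]) (le_of_lt hz)
    simp only [Complex.neg_im] at h2
    linarith
  obtain ⟨c, hcc⟩ := (hd.analyticOnNhd hopen).eq_const_of_im_eq_const him hopen
    ⟨⟨I, by simp⟩, (convex_halfSpace_im_gt 0).isPreconnected⟩
  have hext : Set.EqOn F (fun _ => c) {z : ℂ | 0 ≤ z.im} := by
    refine Set.EqOn.of_subset_closure (s := {z : ℂ | 0 < z.im}) hcc hc continuousOn_const ?_ ?_
    · intro z hz
      exact le_of_lt (show (0 : ℝ) < z.im from hz)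
    · rw [Complex.closure_setOfPred_lt_im]
  rw [hext (by simp : (s : ℂ) ∈ {z : ℂ | 0 ≤ z.im}), hext (by simp : (t : ℂ) ∈ {z : ℂ | 0 ≤ z.im})]

/-- States are real on self-adjoint elements: expand `φ ((1 + a)²) ≥ 0`. -/
lemma IsState.im_eq_zero {φ : A →ₗ[ℂ] ℂ} (hφ : IsState φ) {a : A} (ha : star a = a) :
    (φ a).im = 0 := by
  have h1 := (Complex.le_def.1 (hφ.1 (1 + a))).2
  have h2 := (Complex.le_def.1 (hφ.1 a)).2
  have h3 : star (1 + a) * (1 + a) = 1 + (2 : ℂ) • a + star a * a := by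
    rw [two_smul, star_add, star_one, ha]
    noncomm_ring
  rw [h3, map_add, map_add, map_smul, hφ.2] at h1
  simp at h1 h2
  linarith

/-- Every ground state (∞-KMS state) for a strongly continuous one-parameter group of
*-automorphisms of a unital C*-algebra is invariant under the time evolution. -/
theorem ground_state_time_invariant
    (α : ℝ → (A ≃⋆ₐ[ℂ] A)) (hα : IsDynamics α)
    (φ : A →ₗ[ℂ] ℂ) (hφ : IsGroundState α φ) :
    ∀ (t : ℝ) (a : A), φ (α t a) = φ a := by
  have hsa : ∀ (t : ℝ) (a : A), star a = a → φ (α t a) = φ a := by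
    intro t a ha
    obtain ⟨F, hc, ⟨C, hC⟩, hd, hF⟩ := hφ.2 1 a
    have hr : ∀ t : ℝ, (F t).im = 0 := fun t => by
      rw [hF, one_mul]
      exact hφ.1.im_eq_zero (by rw [← map_star, ha])
    have h := eq_of_bounded_of_real hc hC hd hr t 0
    rwa [hF, hF, one_mul, one_mul, hα.1] at h
  intro t a
  rw [← realPart_add_I_smul_imaginaryPart a]
  simp only [map_add, map_smul]
  rw [hsa t _ (realPart a).2, hsa t _ (imaginaryPart a).2]
end

section
/- Let β > 0 and let F : ℂ → ℂ be continuous and bounded on the closed strip D_β = {z ∈ ℂ : 0 ≤ Im z ≤ β}, holomorphic on the open strip {z ∈ ℂ : 0 < Im z < β}, and satisfy the periodicity condition F(t + iβ) = F(t) for all t ∈ ℝ. Then F is constant on D_β. -/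
open Complex Set Interval

/-- Removability of the real line: a continuous function which is holomorphic off the real line is
holomorphic. -/
lemma differentiableOn_of_off_real_line {U : Set ℂ} (hU : IsOpen U) {f : ℂ → ℂ}
    (hc : ContinuousOn f U) (hd : DifferentiableOn ℂ f (U ∩ {z | z.im ≠ 0})) :
    DifferentiableOn ℂ f U := by
  refine (isConservativeOn_and_continuousOn_iff_isDifferentiableOn hU).1 ⟨?_, hc⟩
  have one_side : ∀ z w : ℂ, Rectangle z w ⊆ U →
      (0 : ℝ) ∉ Ioo (min z.im w.im) (max z.im w.im) →
      (∫ x : ℝ in z.re..w.re, f (x + z.im * I)) - (∫ x : ℝ in z.re..w.re, f (x + w.im * I)) +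
        I • (∫ y : ℝ in z.im..w.im, f (w.re + y * I)) -
        I • (∫ y : ℝ in z.im..w.im, f (z.re + y * I)) = 0 := by
    intro z w hzw h0
    refine integral_boundary_rect_eq_zero_of_continuousOn_of_differentiableOn f z w
      (hc.mono hzw) (hd.mono ?_)
    rintro u ⟨hu1, hu2⟩
    refine ⟨hzw ⟨Ioo_subset_Icc_self hu1, Ioo_subset_Icc_self hu2⟩, fun h => h0 ?_⟩
    rw [mem_preimage, show u.im = 0 from h] at hu2
    exact hu2
  intro z w hzw
  rw [← add_eq_zero_iff_eq_neg, wedgeIntegral_add_wedgeIntegral_eq]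
  by_cases h0 : (0 : ℝ) ∈ Ioo (min z.im w.im) (max z.im w.im)
  · have h0' : (0 : ℝ) ∈ [[z.im, w.im]] := Ioo_subset_Icc_self h0
    have hz0 : [[z.im, 0]] ⊆ [[z.im, w.im]] := uIcc_subset_uIcc_left h0'
    have h0w : [[0, w.im]] ⊆ [[z.im, w.im]] := uIcc_subset_uIcc_right h0'
    have e1 := one_side z (w.re : ℂ)
      (fun u hu => hzw ⟨by simpa using hu.1, hz0 (by simpa using hu.2)⟩)
      (by
        rw [ofReal_im]
        rintro ⟨h1, h2⟩
        rcases min_lt_iff.1 h1 with h1 | h1 <;> rcases lt_max_iff.1 h2 with h2 | h2 <;> linarith)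
    have e2 := one_side (z.re : ℂ) w
      (fun u hu => hzw ⟨by simpa using hu.1, h0w (by simpa using hu.2)⟩)
      (by
        rw [ofReal_im]
        rintro ⟨h1, h2⟩
        rcases min_lt_iff.1 h1 with h1 | h1 <;> rcases lt_max_iff.1 h2 with h2 | h2 <;> linarith)
    have side : ∀ a ∈ [[z.re, w.re]],
        (∫ y : ℝ in z.im..0, f (a + y * I)) + (∫ y : ℝ in 0..w.im, f (a + y * I)) =
          ∫ y : ℝ in z.im..w.im, f (a + y * I) := by
      intro a ha
      have hcont : ContinuousOn (fun y : ℝ => f (a + y * I)) [[z.im, w.im]] :=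
        hc.comp (by fun_prop) fun y hy => hzw ⟨by simpa using ha, by simpa using hy⟩
      exact intervalIntegral.integral_add_adjacent_intervals
        (hcont.mono hz0).intervalIntegrable (hcont.mono h0w).intervalIntegrable
    rw [← side _ left_mem_uIcc, ← side _ right_mem_uIcc]
    simp only [ofReal_re, ofReal_im, smul_eq_mul] at e1 e2 ⊢
    linear_combination e1 + e2
  · exact one_side z w hzw h0

/-- The `iβ`-periodic function on `ℂ` which agrees with `F` on `0 ≤ Im z < β`. -/
noncomputable def stripExtension (β : ℝ) (F : ℂ → ℂ) (z : ℂ) : ℂ :=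
  F (z - (⌊z.im / β⌋ : ℝ) * (β * I))

lemma stripExtension_add {β : ℝ} (hβ : 0 < β) (F : ℂ → ℂ) (n : ℤ) (z : ℂ) :
    stripExtension β F (z + (n : ℝ) * (β * I)) = stripExtension β F z := by
  have h : (z + (n : ℝ) * (β * I)).im / β = z.im / β + n := by
    simp
    field_simp
  rw [stripExtension, stripExtension, h, Int.floor_add_intCast]
  congr 1
  push_cast
  ring

lemma sub_floor_mem_closedStrip {β : ℝ} (hβ : 0 < β) (z : ℂ) :
    z - (⌊z.im / β⌋ : ℝ) * (β * I) ∈ closedStrip β := by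
  have h1 := (le_div_iff₀ hβ).1 (Int.floor_le (z.im / β))
  have h2 := (div_lt_iff₀ hβ).1 (Int.lt_floor_add_one (z.im / β))
  constructor <;> simp <;> linarith

/-- The extension agrees with `F` also on the top edge `Im z = β`, by the periodicity of `F`. -/
lemma stripExtension_eq {β : ℝ} (hβ : 0 < β) {F : ℂ → ℂ}
    (hper : ∀ t : ℝ, F (t + β * I) = F t) {z : ℂ} (hz : z ∈ closedStrip β) :
    stripExtension β F z = F z := by
  rcases hz.2.lt_or_eq with h | h
  · have : ⌊z.im / β⌋ = 0 :=
      Int.floor_eq_zero_iff.2 ⟨div_nonneg hz.1 hβ.le, (div_lt_one hβ).2 h⟩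
    simp [stripExtension, this]
  · have hz' : z = z.re + β * I := by rw [← h, re_add_im]
    have h1 : z - β * I = z.re := by linear_combination hz'
    rw [stripExtension, h, div_self hβ.ne', Int.floor_one]
    simp only [Int.cast_one, ofReal_one, one_mul]
    rw [h1, ← hper, ← hz']

lemma stripExtension_eq_shift {β : ℝ} (hβ : 0 < β) {F : ℂ → ℂ}
    (hper : ∀ t : ℝ, F (t + β * I) = F t) {z : ℂ} (hz : z + β * I ∈ closedStrip β) :
    stripExtension β F z = F (z + β * I) := by
  rw [← stripExtension_eq hβ hper hz]
  simpa using (stripExtension_add hβ F 1 z).symm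

lemma isClosed_closedStrip (β : ℝ) : IsClosed (closedStrip β) :=
  (isClosed_le continuous_const continuous_im).inter (isClosed_le continuous_im continuous_const)

lemma isOpen_openStrip (β : ℝ) : IsOpen (openStrip β) :=
  (isOpen_lt continuous_const continuous_im).inter (isOpen_lt continuous_im continuous_const)

lemma openStrip_subset_closedStrip (β : ℝ) : openStrip β ⊆ closedStrip β :=
  fun _ hz => ⟨hz.1.le, hz.2.le⟩

lemma differentiableOn_stripExtension {β : ℝ} (hβ : 0 < β) {F : ℂ → ℂ}
    (hcont : ContinuousOn F (closedStrip β)) (hdiff : DifferentiableOn ℂ F (openStrip β))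
    (hper : ∀ t : ℝ, F (t + β * I) = F t) :
    DifferentiableOn ℂ (stripExtension β F) {z | -β < z.im ∧ z.im < β} := by
  have hshift : Continuous fun z : ℂ => z + β * I := by fun_prop
  refine differentiableOn_of_off_real_line ?_ ?_ ?_
  · exact (isOpen_lt continuous_const continuous_im).inter
      (isOpen_lt continuous_im continuous_const)
  · have hu : ContinuousOn (stripExtension β F) (closedStrip β) :=
      hcont.congr fun z hz => stripExtension_eq hβ hper hz
    have hl : ContinuousOn (stripExtension β F) ((fun z : ℂ => z + β * I) ⁻¹' closedStrip β) :=
      (hcont.comp hshift.continuousOn (mapsTo_preimage _ _)).congr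
        fun z hz => stripExtension_eq_shift hβ hper hz
    refine (hu.union_of_isClosed hl (isClosed_closedStrip β)
      ((isClosed_closedStrip β).preimage hshift)).mono ?_
    rintro z ⟨h1, h2⟩
    rcases le_total 0 z.im with h | h
    · exact Or.inl ⟨h, h2.le⟩
    · refine Or.inr ⟨?_, ?_⟩ <;> simp <;> linarith
  · have hu : DifferentiableOn ℂ (stripExtension β F) (openStrip β) :=
      hdiff.congr fun z hz => stripExtension_eq hβ hper (openStrip_subset_closedStrip β hz)
    have hl : DifferentiableOn ℂ (stripExtension β F)
        ((fun z : ℂ => z + β * I) ⁻¹' openStrip β) :=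
      (hdiff.comp (by fun_prop) (mapsTo_preimage _ _)).congr
        fun z hz => stripExtension_eq_shift hβ hper (openStrip_subset_closedStrip β hz)
    refine (hu.union_of_isOpen hl (isOpen_openStrip β)
      ((isOpen_openStrip β).preimage hshift)).mono ?_
    rintro z ⟨⟨h1, h2⟩, h0⟩
    rcases lt_or_gt_of_ne (show z.im ≠ 0 from h0) with h | h
    · refine Or.inr ⟨?_, ?_⟩ <;> simp <;> linarith
    · exact Or.inl ⟨h, h2⟩

lemma differentiable_stripExtension {β : ℝ} (hβ : 0 < β) {F : ℂ → ℂ}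
    (hcont : ContinuousOn F (closedStrip β)) (hdiff : DifferentiableOn ℂ F (openStrip β))
    (hper : ∀ t : ℝ, F (t + β * I) = F t) : Differentiable ℂ (stripExtension β F) := by
  intro z
  -- translate `z` by a multiple of `iβ` to height in `[0, β)`
  set n : ℤ := ⌊z.im / β⌋ with hn
  have h1 := (le_div_iff₀ hβ).1 (Int.floor_le (z.im / β))
  have h2 := (div_lt_iff₀ hβ).1 (Int.lt_floor_add_one (z.im / β))
  have hopen : IsOpen {z : ℂ | -β < z.im ∧ z.im < β} :=
    (isOpen_lt continuous_const continuous_im).inter (isOpen_lt continuous_im continuous_const)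
  have hd : DifferentiableAt ℂ (stripExtension β F) (z + ((-n : ℤ) : ℝ) * (β * I)) := by
    refine (differentiableOn_stripExtension hβ hcont hdiff hper).differentiableAt
      (hopen.mem_nhds ⟨?_, ?_⟩) <;> simp <;> linarith
  have hcomp := hd.comp z (f := fun z => z + ((-n : ℤ) : ℝ) * (β * I)) (by fun_prop)
  exact hcomp.congr_of_eventuallyEq
    (Filter.Eventually.of_forall fun w => (stripExtension_add hβ F (-n) w).symm)

/-- A function continuous and bounded on the closed strip of height β > 0, holomorphic on
the open strip, and iβ-periodic on the boundary, is constant on the closed strip. -/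
theorem periodic_bounded_holomorphic_on_strip_constant
    (β : ℝ) (hβ : 0 < β) (F : ℂ → ℂ)
    (hcont : ContinuousOn F (closedStrip β))
    (hbdd : ∃ C : ℝ, ∀ z ∈ closedStrip β, ‖F z‖ ≤ C)
    (hdiff : DifferentiableOn ℂ F (openStrip β))
    (hper : ∀ t : ℝ, F (t + β * Complex.I) = F t) :
    ∀ z ∈ closedStrip β, ∀ w ∈ closedStrip β, F z = F w := by
  intro z hz w hw
  obtain ⟨C, hC⟩ := hbdd
  have hb : Bornology.IsBounded (range (stripExtension β F)) := by
    refine isBounded_iff_forall_norm_le.2 ⟨C, ?_⟩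
    rintro _ ⟨u, rfl⟩
    exact hC _ (sub_floor_mem_closedStrip hβ u)
  rw [← stripExtension_eq hβ hper hz, ← stripExtension_eq hβ hper hw]
  exact (differentiable_stripExtension hβ hcont hdiff hper).apply_eq_apply_of_bounded hb z w
end

section
/- Let A be a unital C*-algebra, α a strongly continuous one-parameter group of *-automorphisms of A, and 0 < β < ∞. Let (φ_k) be a sequence of β-KMS states for α and φ a linear functional on A such that φ_k(a) → φ(a) for every a ∈ A. Then φ is a β-KMS state for α. In particular, every weak-* limit of local Gibbs states along a net is again an equilibrium (KMS) state for the same dynamics. -/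
/-!
The KMS functions `F k` of `φk k` for fixed `a`, `b` need not converge uniformly on the strip, but
their Gaussian damped versions `exp (-z ^ 2) * F k z` do. Indeed, on the two edges these are the
values of `φk k` along the curves `t ↦ exp (-z ^ 2) • (a * α t b)` and
`t ↦ exp (-z ^ 2) • (α t b * a)`, which are continuous and vanish at infinity, hence have relatively
compact range (`isCompact_insert_range_gaussian`). By Banach-Steinhaus the `φk k` are uniformly
bounded (`exists_uniform_bound`), so their pointwise convergence is uniform on compact sets
(`tendstoUniformlyOn_of_isCompact`), in particular on both edges. The Phragmen-Lindelöf principle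
(`norm_le_of_edges`) turns this into a uniform Cauchy estimate on the closed strip. The limit is
continuous on the closed strip and holomorphic inside, and multiplying it by `exp (z ^ 2)` gives a
KMS function for `φ`; it is bounded because the `F k` are bounded uniformly in `k`.
-/

open Complex
open scoped ComplexOrder

variable {A : Type*} [NormedRing A] [StarRing A] [CStarRing A]
  [NormedAlgebra ℂ A] [CompleteSpace A] [StarModule ℂ A]

open Filter Topology

/-- The maximum principle for bounded functions on a horizontal strip. -/
lemma norm_le_of_edges {β : ℝ} (hβ : 0 < β) {F : ℂ → ℂ} {C : ℝ}
    (hc : ContinuousOn F (closedStrip β)) (hb : ∃ M : ℝ, ∀ z ∈ closedStrip β, ‖F z‖ ≤ M)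
    (hd : DifferentiableOn ℂ F (openStrip β)) (h0 : ∀ t : ℝ, ‖F t‖ ≤ C)
    (h1 : ∀ t : ℝ, ‖F (t + β * Complex.I)‖ ≤ C) {z : ℂ} (hz : z ∈ closedStrip β) :
    ‖F z‖ ≤ C := by
  obtain ⟨M, hM⟩ := hb
  have hcl : closure (Complex.im ⁻¹' Set.Ioo 0 β) ⊆ closedStrip β := by
    refine closure_minimal (fun w hw => ⟨hw.1.le, hw.2.le⟩) ?_
    exact (isClosed_le continuous_const Complex.continuous_im).inter
      (isClosed_le Complex.continuous_im continuous_const)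
  refine PhragmenLindelof.horizontal_strip (a := 0) (b := β) ⟨hd, hc.mono hcl⟩
    ⟨0, by have := Real.pi_pos; simp only [sub_zero]; positivity, 0, ?_⟩ ?_ ?_ hz.1 hz.2
  · refine Asymptotics.IsBigO.of_bound M ?_
    refine Filter.Eventually.filter_mono inf_le_right ?_
    refine Filter.eventually_principal.2 fun w hw => ?_
    simpa using hM w (hcl (subset_closure hw))
  · intro w hw
    have : w = (w.re : ℂ) := by apply Complex.ext <;> simp [hw]
    rw [this]; exact h0 _
  · intro w hw
    have : w = (w.re : ℂ) + β * Complex.I := by apply Complex.ext <;> simp [hw]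
    rw [this]; exact h1 _

/-- Positive functionals on a C*-algebra are bounded. -/
lemma IsState.continuous {φ : A →ₗ[ℂ] ℂ} (h : IsState φ) : Continuous φ := by
  let _ : CStarAlgebra A := { }
  let _ := CStarAlgebra.spectralOrder A
  have := CStarAlgebra.spectralOrderedRing A
  have hpos : ∀ x : A, 0 ≤ x → 0 ≤ φ x := by
    intro x hx
    obtain ⟨y, rfl⟩ := CStarAlgebra.nonneg_iff_eq_star_mul_self.1 hx
    exact h.1 y
  exact map_continuous (PositiveLinearMap.mk₀ φ hpos)

/-- A *-automorphism of a C*-algebra is isometric. -/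
lemma norm_starAlgEquiv_apply (e : A ≃⋆ₐ[ℂ] A) (b : A) : ‖e b‖ = ‖b‖ := by
  let _ : CStarAlgebra A := { }
  exact StarAlgEquiv.norm_map e b

/-- Pointwise convergent sequences of states are uniformly bounded, by the Banach-Steinhaus
theorem; the sharp constant `1` is not needed. -/
lemma exists_uniform_bound {φk : ℕ → (A →ₗ[ℂ] ℂ)} {φ : A →ₗ[ℂ] ℂ} (hk : ∀ k, IsState (φk k))
    (hlim : ∀ a : A, Tendsto (fun k => φk k a) atTop (𝓝 (φ a))) :
    ∃ C : ℝ, 0 ≤ C ∧ (∀ k a, ‖φk k a‖ ≤ C * ‖a‖) ∧ ∀ a, ‖φ a‖ ≤ C * ‖a‖ := by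
  obtain ⟨C, hC⟩ := banach_steinhaus
    (g := fun k => (⟨φk k, (hk k).continuous⟩ : A →L[ℂ] ℂ)) (by
      intro x
      obtain ⟨M, hM⟩ := (hlim x).norm.bddAbove_range
      exact ⟨M, fun i => hM ⟨i, rfl⟩⟩)
  have hb : ∀ k a, ‖φk k a‖ ≤ C * ‖a‖ := fun k a =>
    ContinuousLinearMap.le_of_opNorm_le ⟨φk k, (hk k).continuous⟩ (hC k) a
  exact ⟨C, (norm_nonneg _).trans (hC 0), hb,
    fun a => le_of_tendsto' (hlim a).norm fun k => hb k a⟩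

/-- Pointwise convergence of uniformly bounded functionals is uniform on compact sets. -/
lemma tendstoUniformlyOn_of_isCompact {E : Type*} [NormedAddCommGroup E] [NormedSpace ℂ E]
    {ψk : ℕ → (E →ₗ[ℂ] ℂ)} {ψ : E →ₗ[ℂ] ℂ} {C : ℝ} (hC : 0 ≤ C)
    (hk : ∀ k a, ‖ψk k a‖ ≤ C * ‖a‖) (hψ : ∀ a, ‖ψ a‖ ≤ C * ‖a‖)
    (hlim : ∀ a, Tendsto (fun k => ψk k a) atTop (𝓝 (ψ a))) {K : Set E} (hK : IsCompact K) :
    TendstoUniformlyOn (fun k a => ψk k a) ψ atTop K := by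
  rw [Metric.tendstoUniformlyOn_iff]
  intro ε hε
  obtain ⟨δ, hδ, hCδ⟩ : ∃ δ > 0, C * δ < ε / 3 := by
    refine ⟨ε / 3 / (C + 1), by positivity, ?_⟩
    rw [mul_div_assoc', div_lt_iff₀ (by positivity)]
    nlinarith
  obtain ⟨T, hT, hcov⟩ := Metric.totallyBounded_iff.1 hK.totallyBounded δ hδ
  have hev : ∀ᶠ k in atTop, ∀ y ∈ T, dist (ψk k y) (ψ y) < ε / 3 :=
    (Set.Finite.eventually_all hT).2 fun y _ => Metric.tendsto_nhds.1 (hlim y) _ (by positivity)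
  filter_upwards [hev] with k hkT x hx
  obtain ⟨y, hy, hxy⟩ := Set.mem_iUnion₂.1 (hcov hx)
  rw [Metric.mem_ball, dist_eq_norm] at hxy
  have h1 : dist (ψ x) (ψ y) < ε / 3 := by
    rw [dist_eq_norm, ← map_sub]
    exact ((hψ _).trans (mul_le_mul_of_nonneg_left hxy.le hC)).trans_lt hCδ
  have h2 : dist (ψk k y) (ψk k x) < ε / 3 := by
    rw [dist_comm, dist_eq_norm, ← map_sub]
    exact ((hk _ _).trans (mul_le_mul_of_nonneg_left hxy.le hC)).trans_lt hCδ
  have h3 := hkT y hy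
  rw [dist_comm] at h3
  linarith [dist_triangle4 (ψ x) (ψ y) (ψk k y) (ψk k x)]

lemma norm_gaussian (z : ℂ) : ‖Complex.exp (-z ^ 2)‖ = Real.exp (z.im ^ 2 - z.re ^ 2) := by
  rw [Complex.norm_exp]
  congr 1
  simp [pow_two]

/-- A bounded continuous curve, damped by a Gaussian along the line of height `y`, vanishes at
infinity, so adding `0` to its range makes it compact. -/
lemma isCompact_insert_range_gaussian {E : Type*} [NormedAddCommGroup E] [NormedSpace ℂ E]
    {u : ℝ → E} (hu : Continuous u) {M : ℝ} (hM : ∀ t, ‖u t‖ ≤ M) (y : ℝ) :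
    IsCompact (insert 0 (Set.range fun t : ℝ =>
      Complex.exp (-((t : ℂ) + y * Complex.I) ^ 2) • u t)) := by
  refine Filter.Tendsto.isCompact_insert_range_of_cocompact ?_ (by fun_prop)
  have hsq : Tendsto (fun t : ℝ => t ^ 2) (cocompact ℝ) atTop := by
    have := (tendsto_pow_atTop (two_ne_zero)).comp (tendsto_norm_cocompact_atTop (E := ℝ))
    simpa [Function.comp_def] using this
  have hexp : Tendsto (fun t : ℝ => Real.exp (y ^ 2 - t ^ 2) * M) (cocompact ℝ) (𝓝 0) := by
    have h : Tendsto (fun t : ℝ => y ^ 2 - t ^ 2) (cocompact ℝ) atBot := by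
      simpa [sub_eq_add_neg] using
        tendsto_atBot_add_const_left _ (y ^ 2) (tendsto_neg_atTop_atBot.comp hsq)
    simpa using (Real.tendsto_exp_atBot.comp h).mul_const M
  refine squeeze_zero_norm (fun t => ?_) hexp
  rw [norm_smul, norm_gaussian]
  simpa using mul_le_mul_of_nonneg_left (hM t) (Real.exp_pos _).le

/-- A pointwise (weak-*) limit of β-KMS states for the dynamics α is again a β-KMS state
for α. In particular every weak-* limit of local Gibbs states is an equilibrium state. -/
theorem kms_state_weak_star_limit
    (α : ℝ → (A ≃⋆ₐ[ℂ] A)) (hα : IsDynamics α) (β : ℝ) (hβ : 0 < β)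
    (φk : ℕ → (A →ₗ[ℂ] ℂ)) (φ : A →ₗ[ℂ] ℂ)
    (hk : ∀ k, IsKMSState α β (φk k))
    (hlim : ∀ a : A, Filter.Tendsto (fun k => φk k a) Filter.atTop (nhds (φ a))) :
    IsKMSState α β φ := by
  obtain ⟨C, hC0, hCk, hCφ⟩ := exists_uniform_bound (fun k => (hk k).1) hlim
  refine ⟨⟨fun a => ge_of_tendsto' (hlim _) fun k => (hk k).1.1 a, ?_⟩, fun a b => ?_⟩
  · exact tendsto_nhds_unique (hlim 1) (by simp [(hk _).1.2])
  choose F hFc hFb hFd hF0 hF1 using fun k => (hk k).2 a b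
  have hab : ∀ t, ‖a * α t b‖ ≤ ‖a‖ * ‖b‖ := fun t =>
    (norm_mul_le _ _).trans_eq (by rw [norm_starAlgEquiv_apply])
  have hba : ∀ t, ‖α t b * a‖ ≤ ‖a‖ * ‖b‖ := fun t =>
    (norm_mul_le _ _).trans_eq (by rw [norm_starAlgEquiv_apply, mul_comm])
  have hcont : Continuous fun t => α t b := hα.2.2 b
  have hFbd : ∀ k, ∀ z ∈ closedStrip β, ‖F k z‖ ≤ C * (‖a‖ * ‖b‖) := by
    intro k z hz
    refine norm_le_of_edges hβ (hFc k) (hFb k) (hFd k) (fun t => ?_) (fun t => ?_) hz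
    · rw [hF0]
      exact (hCk k _).trans (mul_le_mul_of_nonneg_left (hab t) hC0)
    · rw [hF1]
      exact (hCk k _).trans (mul_le_mul_of_nonneg_left (hba t) hC0)
  set G : ℕ → ℂ → ℂ := fun k z => Complex.exp (-z ^ 2) * F k z with hG
  have hgauss : ∀ z ∈ closedStrip β, ‖Complex.exp (-z ^ 2)‖ ≤ Real.exp (β ^ 2) := by
    intro z hz
    rw [norm_gaussian]
    apply Real.exp_le_exp.2
    nlinarith [hz.1, hz.2, sq_nonneg z.re]
  have hGc : ∀ k, ContinuousOn (G k) (closedStrip β) := fun k =>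
    (by fun_prop : Continuous fun z : ℂ => Complex.exp (-z ^ 2)).continuousOn.mul (hFc k)
  have hGd : ∀ k, DifferentiableOn ℂ (G k) (openStrip β) := fun k =>
    (by fun_prop : Differentiable ℂ fun z : ℂ => Complex.exp (-z ^ 2)).differentiableOn.mul (hFd k)
  have hGb : ∀ k, ∀ z ∈ closedStrip β, ‖G k z‖ ≤ Real.exp (β ^ 2) * (C * (‖a‖ * ‖b‖)) := by
    intro k z hz
    rw [hG, norm_mul]
    exact mul_le_mul (hgauss z hz) (hFbd k z hz) (norm_nonneg _) (Real.exp_pos _).le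
  -- On each edge, `G k` is `φk k` along a curve of relatively compact range. The edge `Im z = 0` is
  -- height `y = 0`, where the exponent reads `t + 0 * I`.
  have hU0 := (tendstoUniformlyOn_of_isCompact hC0 hCk hCφ hlim
    (isCompact_insert_range_gaussian (u := fun t => a * α t b) (by fun_prop) hab 0))
    |>.uniformCauchySeqOn
  have hU1 := (tendstoUniformlyOn_of_isCompact hC0 hCk hCφ hlim
    (isCompact_insert_range_gaussian (u := fun t => α t b * a) (by fun_prop) hba β))
    |>.uniformCauchySeqOn
  have hUC : UniformCauchySeqOn G atTop (closedStrip β) := by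
    rw [Metric.uniformCauchySeqOn_iff] at hU0 hU1 ⊢
    intro ε hε
    obtain ⟨N0, hN0⟩ := hU0 (ε / 2) (half_pos hε)
    obtain ⟨N1, hN1⟩ := hU1 (ε / 2) (half_pos hε)
    refine ⟨max N0 N1, fun m hm n hn z hz => ?_⟩
    rw [dist_eq_norm]
    refine lt_of_le_of_lt ?_ (half_lt_self hε)
    refine norm_le_of_edges (F := fun z => G m z - G n z) hβ ((hGc m).sub (hGc n))
      ⟨_, fun w hw => norm_sub_le_of_le (hGb m w hw) (hGb n w hw)⟩
      ((hGd m).sub (hGd n)) (fun t => ?_) (fun t => ?_) hz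
    · have := hN0 m (le_of_max_le_left hm) n (le_of_max_le_left hn) _
        (Set.mem_insert_of_mem _ ⟨t, rfl⟩)
      rw [dist_eq_norm] at this
      simpa [hG, hF0] using this.le
    · have := hN1 m (le_of_max_le_right hm) n (le_of_max_le_right hn) _
        (Set.mem_insert_of_mem _ ⟨t, rfl⟩)
      rw [dist_eq_norm] at this
      simpa [hG, hF1] using this.le
  -- The limit is chosen at every point of `ℂ`; off the strip its value is arbitrary.
  have hex : ∀ z, ∃ w, z ∈ closedStrip β → Tendsto (fun k => G k z) atTop (𝓝 w) := by
    intro z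
    by_cases hz : z ∈ closedStrip β
    · obtain ⟨w, hw⟩ := cauchySeq_tendsto_of_complete (hUC.cauchySeq hz)
      exact ⟨w, fun _ => hw⟩
    · exact ⟨0, fun h => absurd h hz⟩
  choose g hg using hex
  have hunif : TendstoUniformlyOn G g atTop (closedStrip β) :=
    hUC.tendstoUniformlyOn_of_tendsto fun z hz => hg z hz
  have hopen : IsOpen (openStrip β) :=
    (isOpen_lt continuous_const Complex.continuous_im).inter
      (isOpen_lt Complex.continuous_im continuous_const)
  have hsub : openStrip β ⊆ closedStrip β := fun z hz => ⟨hz.1.le, hz.2.le⟩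
  have hgc : ContinuousOn g (closedStrip β) := hunif.continuousOn (.of_forall hGc)
  have hgd : DifferentiableOn ℂ g (openStrip β) :=
    (hunif.mono hsub).tendstoLocallyUniformlyOn.differentiableOn (.of_forall hGd) hopen
  -- Undoing the damping, the KMS functions themselves converge pointwise on the closed strip, which
  -- gives the bound and both boundary values of the limit.
  have hlimF : ∀ z ∈ closedStrip β,
      Tendsto (fun k => F k z) atTop (𝓝 (Complex.exp (z ^ 2) * g z)) := by
    intro z hz
    refine ((hg z hz).const_mul (Complex.exp (z ^ 2))).congr fun k => ?_
    rw [hG, ← mul_assoc, ← Complex.exp_add, add_neg_cancel, Complex.exp_zero, one_mul]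
  refine ⟨fun z => Complex.exp (z ^ 2) * g z, ?_, ⟨C * (‖a‖ * ‖b‖), ?_⟩, ?_, fun t => ?_,
    fun t => ?_⟩
  · exact (by fun_prop : Continuous fun z : ℂ => Complex.exp (z ^ 2)).continuousOn.mul hgc
  · exact fun z hz => le_of_tendsto' (hlimF z hz).norm fun k => hFbd k z hz
  · exact (by fun_prop : Differentiable ℂ fun z : ℂ => Complex.exp (z ^ 2)).differentiableOn.mul hgd
  · refine tendsto_nhds_unique (hlimF t (by simp [closedStrip, hβ.le])) ?_
    simpa only [hF0] using hlim (a * α t b)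
  · refine tendsto_nhds_unique (hlimF (t + β * Complex.I) (by simp [closedStrip, hβ.le])) ?_
    simpa only [hF1] using hlim (α t b * a)
end
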